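/- arXiv:1302.0225 — 2 statements merged into one kernel-verified Lean document; each statement's English description precedes it below -/
import Mathlib

section
/- Let (a_n) be a completely monotone sequence of reals (all iterated forward differences (−1)ᵏ applied repeatedly are nonnegative: Δ⁽ᵏ⁾_n ≥ 0 for all k,n, where Δ⁽ᵏ⁺¹⁾_n = Δ⁽ᵏ⁾_n − Δ⁽ᵏ⁾_{n+1}, Δ⁽⁰⁾_n = a_n) with a_0 = 1. Then there exists a Borel probability measure ν on [0,1] such that a_n = ∫_{[0,1]} xⁿ dν(x) for all n (Hausdorff representation). -/
open MeasureTheory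

/-- Iterated finite differences of a sequence: `Δ⁽⁰⁾ₙ = aₙ`,
`Δ⁽ᵏ⁺¹⁾ₙ = Δ⁽ᵏ⁾ₙ − Δ⁽ᵏ⁾ₙ₊₁`. -/
def iterDiff (a : ℕ → ℝ) : ℕ → ℕ → ℝ
  | 0, n => a n
  | (k+1), n => iterDiff a k n - iterDiff a k (n+1)

/-!
Let `L` be the linear functional on `ℝ[X]` with `L (X ^ n) = a n`. Complete monotonicity says that
`L (X ^ n * (1 - X) ^ k) ≥ 0`, so `L` is nonnegative on the Bernstein polynomials. The Bernstein
approximations `B_N p` of a polynomial `p` satisfy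
`B_N (X p) = X * B_N p + X * (1 - X) * (B_N p)' / N`, whence by induction `L (B_N p) → L p` for
*every* linear functional `L`, without any uniform estimate. Hence `L p ≥ 0` whenever `p ≥ 0` on
`[0, 1]`; such an `L` extends to a positive functional on `C([0, 1], ℝ)`, which the
Riesz–Markov–Kakutani theorem represents by a measure.
-/

open Polynomial Filter Topology

theorem exists_positiveLinearMap_apply_eq {V E : Type*} [AddCommGroup V] [Module ℝ V]
    [AddCommGroup E] [PartialOrder E] [IsOrderedAddMonoid E] [Module ℝ E] [PosSMulMono ℝ E]
    (φ : V →ₗ[ℝ] E) (L : V →ₗ[ℝ] ℝ) (hL : ∀ v, 0 ≤ φ v → 0 ≤ L v) (hφ : ∀ y, ∃ v, y ≤ φ v) :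
    ∃ Λ : E →ₚ[ℝ] ℝ, ∀ v, Λ (φ v) = L v := by
  have hker : ∀ v w, φ v = φ w → L v = L w := fun v w h ↦ by
    have h₁ := hL (v - w) (by simp [h])
    have h₂ := hL (w - v) (by simp [h])
    rw [map_sub] at h₁ h₂
    linarith
  obtain ⟨s, hs⟩ := φ.rangeRestrict.exists_rightInverse_of_surjective φ.range_rangeRestrict
  have hφs : ∀ y : φ.range, φ (s y) = y := fun y ↦ congrArg Subtype.val (LinearMap.congr_fun hs y)
  obtain ⟨g, hg, hg_nonneg⟩ := riesz_extension (PointedCone.positive ℝ E) ⟨φ.range, L ∘ₗ s⟩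
    (fun y hy ↦ hL _ (by rw [hφs]; exact hy))
    (fun y ↦ by
      obtain ⟨v, hv⟩ := hφ (-y)
      exact ⟨⟨φ v, v, rfl⟩, neg_le_iff_add_nonneg.1 hv⟩)
  exact ⟨.mk₀ g hg_nonneg, fun v ↦ (hg ⟨φ v, v, rfl⟩).trans (hker _ _ (hφs _))⟩

theorem exists_measure_integral_eq_positiveLinearMap {X : Type*} [TopologicalSpace X]
    [CompactSpace X] [T2Space X] [MeasurableSpace X] [BorelSpace X] (Λ : C(X, ℝ) →ₚ[ℝ] ℝ) :
    ∃ μ : Measure X, IsFiniteMeasure μ ∧ ∀ f, ∫ x, f x ∂μ = Λ f := by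
  let Λc : CompactlySupportedContinuousMap X ℝ →ₚ[ℝ] ℝ :=
    { toFun := fun f ↦ Λ f
      map_add' := fun f g ↦ map_add Λ (f : C(X, ℝ)) g
      map_smul' := fun c f ↦ map_smul Λ c (f : C(X, ℝ))
      monotone' := fun _ _ h ↦ OrderHomClass.mono Λ h }
  exact ⟨RealRMK.rieszMeasure Λc, inferInstance, fun f ↦
    RealRMK.integral_rieszMeasure Λc (CompactlySupportedContinuousMap.continuousMapEquiv f)⟩

theorem exists_measure_integral_eval_eq_of_nonneg {K : Set ℝ} (hK : IsCompact K)
    (L : ℝ[X] →ₗ[ℝ] ℝ) (hL : ∀ p : ℝ[X], (∀ x ∈ K, 0 ≤ p.eval x) → 0 ≤ L p) :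
    ∃ μ : Measure ℝ, IsFiniteMeasure μ ∧ μ Kᶜ = 0 ∧ ∀ p : ℝ[X], ∫ x, p.eval x ∂μ = L p := by
  have : CompactSpace K := isCompact_iff_compactSpace.1 hK
  obtain ⟨Λ, hΛ⟩ := exists_positiveLinearMap_apply_eq (toContinuousMapOnAlgHom K).toLinearMap L
    (fun p hp ↦ hL p fun x hx ↦ ContinuousMap.le_def.1 hp ⟨x, hx⟩)
    (fun f ↦ ⟨C ‖f‖, fun x ↦ by simpa using (le_abs_self _).trans (f.norm_coe_le_norm x)⟩)
  obtain ⟨μ, _, hμ⟩ := exists_measure_integral_eq_positiveLinearMap Λ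
  refine ⟨μ.map Subtype.val, inferInstance, ?_, fun p ↦ ?_⟩
  · rw [Measure.map_apply measurable_subtype_coe hK.measurableSet.compl]
    simp
  · rw [integral_map measurable_subtype_coe.aemeasurable p.continuous.aestronglyMeasurable, ← hΛ,
      ← hμ]
    rfl

section Bernstein

theorem mul_derivative_pow_self {R : Type*} [CommSemiring R] (p : R[X]) (n : ℕ) :
    p * derivative (p ^ n) = (n : R[X]) * p ^ n * derivative p := by
  cases n with
  | zero => simp
  | succ n =>
    simp only [derivative_pow, C_eq_natCast, Nat.add_sub_cancel]
    ring

theorem X_mul_one_sub_X_mul_derivative_bernsteinPolynomial {R : Type*} [CommRing R] {N k : ℕ}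
    (hk : k ≤ N) :
    X * (1 - X) * derivative (bernsteinPolynomial R N k) =
      ((k : R[X]) - (N : R[X]) * X) * bernsteinPolynomial R N k := by
  obtain ⟨m, rfl⟩ := Nat.exists_eq_add_of_le hk
  have hX := mul_derivative_pow_self (X : R[X]) k
  have hX' := mul_derivative_pow_self (1 - X : R[X]) m
  rw [derivative_X] at hX
  rw [derivative_sub, derivative_one, derivative_X] at hX'
  simp only [bernsteinPolynomial, Nat.add_sub_cancel_left, derivative_mul, derivative_natCast,
    Nat.cast_add]
  linear_combination ((k + m).choose k : R[X]) * (1 - X) * (1 - X) ^ m * hX +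
    ((k + m).choose k : R[X]) * X * X ^ k * hX'

variable {𝕜 : Type*} [Field 𝕜]

/-- The Bernstein operator `f ↦ ∑ k ≤ N, f (k / N) * C(N, k) X ^ k (1 - X) ^ (N - k)`, with values
in polynomials (rather than continuous functions on `[0, 1]`, as in `bernsteinApproximation`) so
that arbitrary linear functionals on `𝕜[X]` can be applied to it. For `N = 0` the only node is
`0 / 0 = 0`. -/
noncomputable def bernsteinOperator (N : ℕ) (f : 𝕜 → 𝕜) : 𝕜[X] :=
  ∑ k ∈ Finset.range (N + 1), C (f (k / N)) * bernsteinPolynomial 𝕜 N k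

theorem bernsteinOperator_const (N : ℕ) (c : 𝕜) : bernsteinOperator N (fun _ ↦ c) = C c := by
  rw [bernsteinOperator, ← Finset.mul_sum, bernsteinPolynomial.sum, mul_one]

theorem bernsteinOperator_add (N : ℕ) (f g : 𝕜 → 𝕜) :
    bernsteinOperator N (fun x ↦ f x + g x) = bernsteinOperator N f + bernsteinOperator N g := by
  simp only [bernsteinOperator, C_add, add_mul, Finset.sum_add_distrib]

theorem bernsteinOperator_id_mul {N : ℕ} (hN : (N : 𝕜) ≠ 0) (f : 𝕜 → 𝕜) :
    bernsteinOperator N (fun x ↦ x * f x) = X * bernsteinOperator N f +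
      (N : 𝕜)⁻¹ • (X * (1 - X) * derivative (bernsteinOperator N f)) := by
  simp only [bernsteinOperator, derivative_sum, derivative_C_mul, Finset.mul_sum, Finset.smul_sum,
    ← Finset.sum_add_distrib]
  refine Finset.sum_congr rfl fun k hk ↦ ?_
  have hderiv := X_mul_one_sub_X_mul_derivative_bernsteinPolynomial (R := 𝕜)
    (Finset.mem_range_succ_iff.1 hk)
  have hinv : C (N : 𝕜)⁻¹ * (N : 𝕜[X]) = 1 := by
    rw [← C_eq_natCast, ← C_mul, inv_mul_cancel₀ hN, C_1]
  rw [smul_eq_C_mul, div_eq_mul_inv, C_mul, C_mul, C_eq_natCast]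
  linear_combination -C (f (k * (N : 𝕜)⁻¹)) * C (N : 𝕜)⁻¹ * hderiv +
    C (f (k * (N : 𝕜)⁻¹)) * X * bernsteinPolynomial 𝕜 N k * hinv

theorem tendsto_map_bernsteinOperator_eval {E : Type*} [AddCommGroup E] [Module ℝ E]
    [TopologicalSpace E] [ContinuousAdd E] [ContinuousSMul ℝ E] (p : ℝ[X]) (L : ℝ[X] →ₗ[ℝ] E) :
    Tendsto (fun N ↦ L (bernsteinOperator N p.eval)) atTop (𝓝 (L p)) := by
  induction p using Polynomial.induction_on generalizing L with
  | C c => simpa [bernsteinOperator_const] using tendsto_const_nhds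
  | add p q hp hq => simpa [bernsteinOperator_add] using (hp L).add (hq L)
  | monomial n c ih =>
    set p := C c * X ^ n
    have hmul := ih (L ∘ₗ LinearMap.mulLeft ℝ X)
    have hderiv := ih (L ∘ₗ LinearMap.mulLeft ℝ (X * (1 - X)) ∘ₗ derivative)
    have hlim := hmul.add ((tendsto_inv_atTop_nhds_zero_nat (𝕜 := ℝ)).smul hderiv)
    rw [zero_smul, add_zero] at hlim
    have hXp : C c * X ^ (n + 1) = X * p := by rw [pow_succ', mul_left_comm]
    rw [hXp]
    refine hlim.congr' ?_
    filter_upwards [eventually_ne_atTop 0] with N hN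
    simp [bernsteinOperator_id_mul (Nat.cast_ne_zero.2 hN), mul_assoc]

end Bernstein

section MomentFunctional

/-- The linear functional on polynomials whose moments `X ^ n ↦ a n` are prescribed. -/
noncomputable def momentFunctional {R : Type*} [CommSemiring R] (a : ℕ → R) : R[X] →ₗ[R] R :=
  (basisMonomials R).constr R a

theorem momentFunctional_X_pow {R : Type*} [CommSemiring R] (a : ℕ → R) (n : ℕ) :
    momentFunctional a (X ^ n) = a n := by
  simpa [X_pow_eq_monomial] using! (basisMonomials R).constr_basis R a n

theorem momentFunctional_X_pow_mul_one_sub_X_pow (a : ℕ → ℝ) (n k : ℕ) :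
    momentFunctional a (X ^ n * (1 - X) ^ k) = iterDiff a k n := by
  induction k generalizing n with
  | zero => simp [iterDiff, momentFunctional_X_pow]
  | succ k ih =>
    rw [iterDiff, ← ih, ← ih, ← map_sub]
    congr 1
    ring

theorem momentFunctional_bernsteinPolynomial (a : ℕ → ℝ) (N k : ℕ) :
    momentFunctional a (bernsteinPolynomial ℝ N k) = N.choose k * iterDiff a (N - k) k := by
  rw [bernsteinPolynomial, mul_assoc, ← C_eq_natCast, ← smul_eq_C_mul, map_smul,
    momentFunctional_X_pow_mul_one_sub_X_pow, smul_eq_mul]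

variable {a : ℕ → ℝ}

theorem momentFunctional_bernsteinOperator_nonneg (ha : ∀ k n, 0 ≤ iterDiff a k n) (N : ℕ)
    {f : ℝ → ℝ} (hf : ∀ x ∈ Set.Icc (0 : ℝ) 1, 0 ≤ f x) :
    0 ≤ momentFunctional a (bernsteinOperator N f) := by
  rw [bernsteinOperator, map_sum]
  refine Finset.sum_nonneg fun k hk ↦ ?_
  have hkN : (k : ℝ) ≤ N := Nat.cast_le.2 (Finset.mem_range_succ_iff.1 hk)
  rw [← smul_eq_C_mul, map_smul, momentFunctional_bernsteinPolynomial]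
  exact mul_nonneg (hf _ ⟨by positivity, div_le_one_of_le₀ hkN N.cast_nonneg⟩)
    (mul_nonneg (Nat.cast_nonneg _) (ha _ _))

theorem momentFunctional_nonneg (ha : ∀ k n, 0 ≤ iterDiff a k n) {p : ℝ[X]}
    (hp : ∀ x ∈ Set.Icc (0 : ℝ) 1, 0 ≤ p.eval x) : 0 ≤ momentFunctional a p :=
  ge_of_tendsto' (tendsto_map_bernsteinOperator_eval p (momentFunctional a))
    fun N ↦ momentFunctional_bernsteinOperator_nonneg ha N hp

end MomentFunctional

theorem hausdorff_moment_representation_general (a : ℕ → ℝ)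
    (hmono : ∀ k n : ℕ, 0 ≤ iterDiff a k n) :
    ∃ ν : Measure ℝ, IsFiniteMeasure ν ∧ ν (Set.Icc (0:ℝ) 1)ᶜ = 0 ∧
      ∀ n : ℕ, a n = ∫ x, x ^ n ∂ν := by
  obtain ⟨ν, hfin, hsupp, hν⟩ := exists_measure_integral_eval_eq_of_nonneg isCompact_Icc
    (momentFunctional a) fun _ hp ↦ momentFunctional_nonneg hmono hp
  refine ⟨ν, hfin, hsupp, fun n ↦ ?_⟩
  rw [← momentFunctional_X_pow a n, ← hν]
  simp only [eval_pow, eval_X]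

/-- Hausdorff's representation theorem: a completely monotone sequence with
`a 0 = 1` is the moment sequence of a Borel probability measure on `[0,1]`. -/
theorem hausdorff_moment_representation (a : ℕ → ℝ)
    (hmono : ∀ k n : ℕ, 0 ≤ iterDiff a k n) (h0 : a 0 = 1) :
    ∃ ν : Measure ℝ, IsProbabilityMeasure ν ∧ ν (Set.Icc (0:ℝ) 1)ᶜ = 0 ∧
      ∀ n : ℕ, a n = ∫ x, x ^ n ∂ν := by
  obtain ⟨ν, _, hsupp, hν⟩ := hausdorff_moment_representation_general a hmono
  exact ⟨ν, isProbabilityMeasure_iff_real.2 (by simpa [h0] using (hν 0).symm), hsupp, hν⟩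
end

section
/- Let (Ω,F,μ,T) be an ergodic invertible probability-measure-preserving system and c: Ω → (0,∞) measurable, defining stationary conductances c(x,x+1)(ω) = c(Tˣω) on ℤ. If c̄ := c∘T⁻¹ + c is μ-integrable, then for μ-a.e. ω the heat kernel h_n of the walk started at 0 satisfies liminf_{n→∞} √n ‖h_n‖² ≥ (1/13)·√(∫(1/c)dμ / ∫c̄ dμ), with the convention that the right side is +∞ when ∫(1/c)dμ = +∞; in particular, if ∫(1/c)dμ = +∞, then lim_{n→∞} √n ‖h_n‖² = +∞ for μ-a.e. ω. -/
open MeasureTheory Filter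
open scoped BigOperators ENNReal

/-- `cbar κ x = c(x−1,x) + c(x,x+1)`, where `κ x` denotes the conductance of
the edge `{x, x+1}` of `ℤ`. -/
noncomputable def cbar (κ : ℤ → ℝ) (x : ℤ) : ℝ := κ (x - 1) + κ x

/-- One-step transition probabilities of the nearest-neighbour conductance walk. -/
noncomputable def step (κ : ℤ → ℝ) (x y : ℤ) : ℝ :=
  if y = x + 1 then κ x / cbar κ x
  else if y = x - 1 then κ (x - 1) / cbar κ x else 0

/-- `walk κ n x y = P_x[S_n = y]`, the `n`-step transition probabilities. -/
noncomputable def walk (κ : ℤ → ℝ) : ℕ → ℤ → ℤ → ℝ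
  | 0, x, y => if y = x then 1 else 0
  | (n+1), x, y =>
      walk κ n x (y - 1) * step κ (y - 1) y + walk κ n x (y + 1) * step κ (y + 1) y

/-- The heat kernel `h_n(x) = P_0[S_n = x] / c̄(x)`. -/
noncomputable def heatK (κ : ℤ → ℝ) (n : ℕ) (x : ℤ) : ℝ := walk κ n 0 x / cbar κ x

/-- The energy `‖h_n‖² = Σ_x h_n(x)² c̄(x)`. -/
noncomputable def energy (κ : ℤ → ℝ) (n : ℕ) : ℝ :=
  ∑' x : ℤ, (heatK κ n x) ^ 2 * cbar κ x

/-- The stationary environment of conductances seen from `ω`: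
`c(x,x+1)(ω) = c(Tˣ ω)`. -/
noncomputable def envC {Ω : Type*} (T : Equiv.Perm Ω) (c : Ω → ℝ) (ω : Ω) : ℤ → ℝ :=
  fun x => c ((T ^ x) ω)

open scoped Topology

/-!
By Cauchy–Schwarz, a box `B` carrying mass `P₀[Sₙ ∈ B] = m` has `m² ≤ ‖hₙ‖² ∑_{x ∈ B} c̄(x)`, so it
suffices to find a box of width of order `√n` that still contains a definite part of the walk. For
this, let `F` solve `P F = F + 1` with `F 0 = 0`; explicitly, with `R x = ∑_{0 ≤ j < x} κ j`,
`F (x + 1) - F x = (R x + R (x + 1)) / κ x`. Then `F (Sₙ) - n` is a martingale and Markov's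
inequality gives `P₀[F (Sₙ) ≥ b] ≤ n / b`. By the ergodic theorem `R x` grows like `x ∫ c`, and for
every integrable `0 ≤ g ≤ 1 / c`, `F x` grows at least like `x² ∫ c ∫ g`, which confines the walk;
finally the truncations `g` of `1 / c` increase to `1 / c`.

The ergodic theorem itself follows from the maximal function `Mₙ` of the Birkhoff sums of `f`:
`Mₙ₊₁ - Mₙ ∘ T` has nonnegative integral, is dominated by `|f|`, and tends to `f` wherever `Mₙ → ∞`,
so `∫ f < 0` forces `Mₙ` to stay bounded.
-/

section Birkhoff

variable {Ω : Type*} {T : Ω → Ω} {f : Ω → ℝ}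

/-- The maximal function `max (0, S₁, …, Sₙ)` of the Birkhoff sums `Sₖ` of `f`, defined by the
recursion it satisfies. -/
noncomputable def birkhoffMax (T : Ω → Ω) (f : Ω → ℝ) : ℕ → Ω → ℝ
  | 0, _ => 0
  | n + 1, ω => max 0 (f ω + birkhoffMax T f n (T ω))

lemma birkhoffMax_nonneg (T : Ω → Ω) (f : Ω → ℝ) (n : ℕ) (ω : Ω) : 0 ≤ birkhoffMax T f n ω := by
  cases n with
  | zero => exact le_rfl
  | succ n => exact le_max_left _ _

lemma birkhoffMax_monotone (T : Ω → Ω) (f : Ω → ℝ) (ω : Ω) :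
    Monotone (fun n => birkhoffMax T f n ω) := by
  refine monotone_nat_of_le_succ fun n => ?_
  induction n generalizing ω with
  | zero => exact birkhoffMax_nonneg T f 1 ω
  | succ n ih => exact max_le_max le_rfl (add_le_add_right (ih (T ω)) _)

lemma birkhoffSum_le_birkhoffMax (T : Ω → Ω) (f : Ω → ℝ) (n : ℕ) (ω : Ω) :
    birkhoffSum T f n ω ≤ birkhoffMax T f n ω := by
  induction n generalizing ω with
  | zero => exact (birkhoffSum_zero T f ω).le
  | succ n ih =>
    rw [birkhoffSum_succ']
    exact le_max_of_le_right (add_le_add_right (ih (T ω)) _)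

lemma bddAbove_birkhoffMax_apply_iff (T : Ω → Ω) (f : Ω → ℝ) (ω : Ω) :
    BddAbove (Set.range fun n => birkhoffMax T f n (T ω)) ↔
      BddAbove (Set.range fun n => birkhoffMax T f n ω) := by
  simp only [bddAbove_def, Set.forall_mem_range]
  constructor
  · rintro ⟨C, hC⟩
    refine ⟨max 0 (f ω + C), fun n => (birkhoffMax_monotone T f ω n.le_succ).trans ?_⟩
    exact max_le_max le_rfl (add_le_add_right (hC n) _)
  · rintro ⟨C, hC⟩
    refine ⟨C - f ω, fun n => ?_⟩
    linarith [(le_max_right _ _).trans (hC (n + 1))]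

lemma abs_birkhoffMax_succ_sub_le (T : Ω → Ω) (f : Ω → ℝ) (n : ℕ) (ω : Ω) :
    |birkhoffMax T f (n + 1) ω - birkhoffMax T f n (T ω)| ≤ |f ω| := by
  have hnonneg := birkhoffMax_nonneg T f n (T ω)
  rw [birkhoffMax]
  rcases max_cases 0 (f ω + birkhoffMax T f n (T ω)) with ⟨hmax, hle⟩ | ⟨hmax, -⟩
  · rw [hmax, zero_sub, abs_neg, abs_of_nonneg hnonneg]
    linarith [neg_le_abs (f ω)]
  · rw [hmax, add_sub_cancel_right]

lemma tendsto_birkhoffMax_succ_sub {ω : Ω}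
    (hω : ¬ BddAbove (Set.range fun n => birkhoffMax T f n ω)) :
    Tendsto (fun n => birkhoffMax T f (n + 1) ω - birkhoffMax T f n (T ω)) atTop (𝓝 (f ω)) := by
  rw [← bddAbove_birkhoffMax_apply_iff] at hω
  have htop := tendsto_atTop_atTop_of_monotone' (birkhoffMax_monotone T f (T ω)) hω
  refine tendsto_const_nhds.congr' ?_
  filter_upwards [htop.eventually_ge_atTop (-f ω)] with n hn
  rw [birkhoffMax, max_eq_right (by linarith), add_sub_cancel_right]

variable [MeasurableSpace Ω] {μ : Measure Ω}

lemma integral_comp_eq_of_measurePreserving (hT : MeasurePreserving T μ μ)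
    (hf : AEStronglyMeasurable f μ) : ∫ ω, f (T ω) ∂μ = ∫ ω, f ω ∂μ := by
  rw [← integral_map hT.aemeasurable (hT.map_eq.symm ▸ hf), hT.map_eq]

lemma integrable_birkhoffMax (hT : MeasurePreserving T μ μ) (hf : Integrable f μ) (n : ℕ) :
    Integrable (birkhoffMax T f n) μ := by
  induction n with
  | zero => exact integrable_zero Ω ℝ μ
  | succ n ih => exact (integrable_zero Ω ℝ μ).sup (hf.add (hT.integrable_comp_of_integrable ih))

lemma integral_nonneg_of_ae_not_bddAbove_birkhoffMax (hT : MeasurePreserving T μ μ)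
    (hf : Integrable f μ)
    (hunbdd : ∀ᵐ ω ∂μ, ¬ BddAbove (Set.range fun n => birkhoffMax T f n ω)) :
    0 ≤ ∫ ω, f ω ∂μ := by
  have hint := integrable_birkhoffMax hT hf
  have hcomp : ∀ n, Integrable (fun ω => birkhoffMax T f n (T ω)) μ := fun n =>
    hT.integrable_comp_of_integrable (hint n)
  have hlim : Tendsto (fun n => ∫ ω, birkhoffMax T f (n + 1) ω - birkhoffMax T f n (T ω) ∂μ)
      atTop (𝓝 (∫ ω, f ω ∂μ)) :=
    tendsto_integral_of_dominated_convergence (fun ω => |f ω|)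
      (fun n => ((hint (n + 1)).sub (hcomp n)).aestronglyMeasurable) hf.abs
      (fun n => .of_forall fun ω => abs_birkhoffMax_succ_sub_le T f n ω)
      (hunbdd.mono fun _ => tendsto_birkhoffMax_succ_sub)
  refine ge_of_tendsto' hlim fun n => ?_
  rw [integral_sub (hint (n + 1)) (hcomp n),
    integral_comp_eq_of_measurePreserving hT (hint n).aestronglyMeasurable, sub_nonneg]
  exact integral_mono (hint n) (hint (n + 1)) fun ω => birkhoffMax_monotone T f ω n.le_succ

lemma ae_bddAbove_birkhoffMax (hT : Ergodic T μ) (hf : Integrable f μ)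
    (hneg : ∫ ω, f ω ∂μ < 0) :
    ∀ᵐ ω ∂μ, BddAbove (Set.range fun n => birkhoffMax T f n ω) := by
  have hmeas : NullMeasurableSet {ω | BddAbove (Set.range fun n => birkhoffMax T f n ω)} μ := by
    have haem := fun n => (integrable_birkhoffMax hT.toMeasurePreserving hf n).aemeasurable
    have hset : {ω | BddAbove (Set.range fun n => birkhoffMax T f n ω)} =
        ⋃ C : ℕ, ⋂ n, {ω | birkhoffMax T f n ω ≤ C} := by
      ext ω
      simp only [bddAbove_def, Set.forall_mem_range, Set.mem_iUnion, Set.mem_iInter, Set.mem_ofPred]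
      refine ⟨fun ⟨C, hC⟩ => ?_, fun ⟨C, hC⟩ => ⟨C, hC⟩⟩
      obtain ⟨k, hk⟩ := exists_nat_ge C
      exact ⟨k, fun n => (hC n).trans hk⟩
    rw [hset]
    exact .iUnion fun C => .iInter fun n => nullMeasurableSet_le (haem n) aemeasurable_const
  refine (hT.quasiErgodic.ae_mem_or_ae_notMem₀ hmeas
    (.of_forall fun ω => propext (bddAbove_birkhoffMax_apply_iff T f ω))).resolve_right fun h => ?_
  exact hneg.not_ge (integral_nonneg_of_ae_not_bddAbove_birkhoffMax hT.toMeasurePreserving hf h)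

variable [IsFiniteMeasure μ]

lemma ae_eventually_birkhoffAverage_lt (hT : Ergodic T μ) (hf : Integrable f μ) {b : ℝ}
    (hb : ⨍ ω, f ω ∂μ < b) :
    ∀ᵐ ω ∂μ, ∀ᶠ n in atTop, birkhoffAverage ℝ T f n ω < b := by
  rcases eq_zero_or_neZero μ with rfl | hμ
  · simp only [ae_zero, eventually_bot]
  obtain ⟨a, hfa, hab⟩ := exists_between hb
  have hneg : ∫ ω, f ω - a ∂μ < 0 := by
    rw [integral_sub hf (integrable_const a), integral_const, smul_eq_mul, sub_neg]
    rwa [average_eq, smul_eq_mul, inv_mul_lt_iff₀ measureReal_univ_pos] at hfa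
  filter_upwards [ae_bddAbove_birkhoffMax hT (hf.sub (integrable_const a)) hneg] with ω ⟨C, hC⟩
  have hlim : Tendsto (fun n : ℕ => a + C / n) atTop (𝓝 a) := by
    simpa only [add_zero] using (tendsto_const_div_atTop_nhds_zero_nat C).const_add a
  filter_upwards [hlim.eventually_lt_const hab, eventually_gt_atTop 0] with n hnb hn
  have hn' : (0 : ℝ) < n := Nat.cast_pos.2 hn
  refine lt_of_le_of_lt ?_ hnb
  have hsum : birkhoffSum T f n ω - n * a ≤ C := by
    refine le_trans (le_of_eq ?_) ((birkhoffSum_le_birkhoffMax T (f - fun _ => a) n ω).trans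
      (hC (Set.mem_range_self n)))
    simp [birkhoffSum, Finset.sum_sub_distrib]
  rw [birkhoffAverage, smul_eq_mul, inv_mul_le_iff₀ hn', mul_add, mul_div_cancel₀ _ hn'.ne']
  linarith

lemma ae_forall_gt_eventually_birkhoffAverage_lt (hT : Ergodic T μ) (hf : Integrable f μ) :
    ∀ᵐ ω ∂μ, ∀ b > ⨍ ω, f ω ∂μ, ∀ᶠ n in atTop, birkhoffAverage ℝ T f n ω < b := by
  obtain ⟨u, -, hu, hlim⟩ := exists_seq_strictAnti_tendsto (⨍ ω, f ω ∂μ)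
  filter_upwards [ae_all_iff.2 fun k => ae_eventually_birkhoffAverage_lt hT hf (hu k)]
    with ω hω b hb
  obtain ⟨k, hk⟩ := (hlim.eventually_lt_const hb).exists
  exact (hω k).mono fun n hn => hn.trans hk

theorem ae_tendsto_birkhoffAverage (hT : Ergodic T μ) (hf : Integrable f μ) :
    ∀ᵐ ω ∂μ, Tendsto (birkhoffAverage ℝ T f · ω) atTop (𝓝 (⨍ ω, f ω ∂μ)) := by
  filter_upwards [ae_forall_gt_eventually_birkhoffAverage_lt hT hf,
    ae_forall_gt_eventually_birkhoffAverage_lt hT hf.neg] with ω hupper hlower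
  refine tendsto_order.2 ⟨fun b hb => ?_, hupper⟩
  have hneg : -b > ⨍ ω, (-f) ω ∂μ := by
    simpa only [Pi.neg_apply, average_neg, gt_iff_lt, neg_lt_neg_iff] using hb
  refine (hlower (-b) hneg).mono fun n hn => ?_
  simpa only [birkhoffAverage_neg, Pi.neg_apply, neg_lt_neg_iff] using hn

end Birkhoff

section Averages

open Asymptotics

variable {u g : ℕ → ℝ} {α ρ : ℝ}

lemma tendsto_sum_range_mul_div_sq_of_sum_id_mul (hg : ∀ n, 0 ≤ g n) {γ : ℝ} (hγ : 0 < γ)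
    (hu : Tendsto (fun n => u n / n) atTop (𝓝 α))
    (hlim : Tendsto (fun n : ℕ => (∑ j ∈ Finset.range n, j * g j) / (n : ℝ) ^ 2) atTop (𝓝 γ)) :
    Tendsto (fun n : ℕ => (∑ j ∈ Finset.range n, u j * g j) / (n : ℝ) ^ 2) atTop (𝓝 (α * γ)) := by
  have hsq : Tendsto (fun n : ℕ => (n : ℝ) ^ 2) atTop atTop :=
    (tendsto_pow_atTop two_ne_zero).comp tendsto_natCast_atTop_atTop
  have hdiv : Tendsto (fun n : ℕ => ∑ j ∈ Finset.range n, j * g j) atTop atTop := by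
    refine (hlim.pos_mul_atTop hγ hsq).congr' ?_
    filter_upwards [eventually_ne_atTop 0] with n hn
    rw [div_mul_cancel₀]
    positivity
  have hulittle : (fun n => u n - α * n) =o[atTop] fun n : ℕ => (n : ℝ) := by
    refine (isLittleO_iff_tendsto' ?_).2 ?_
    · filter_upwards [eventually_ne_atTop 0] with n hn hn'
      exact absurd (Nat.cast_eq_zero.1 hn') hn
    · refine (sub_self α ▸ hu.sub_const α).congr' ?_
      filter_upwards [eventually_ne_atTop 0] with n hn
      field_simp
  have herr : (fun n => ∑ j ∈ Finset.range n, (u j - α * j) * g j) =o[atTop]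
      fun n => ∑ j ∈ Finset.range n, j * g j :=
    (hulittle.mul_isBigO (isBigO_refl g atTop)).sum_range
      (fun n => mul_nonneg n.cast_nonneg (hg n)) hdiv
  have hsum : ∀ n, ∑ j ∈ Finset.range n, u j * g j =
      ∑ j ∈ Finset.range n, (u j - α * j) * g j + α * ∑ j ∈ Finset.range n, j * g j := fun n => by
    rw [Finset.mul_sum, ← Finset.sum_add_distrib]
    exact Finset.sum_congr rfl fun j _ => by ring
  have hbound : (fun n : ℕ => ∑ j ∈ Finset.range n, j * g j) =O[atTop] fun n => (n : ℝ) ^ 2 :=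
    isBigO_of_div_tendsto_nhds (.of_forall fun n hn => by
      rw [Nat.cast_eq_zero.1 (pow_eq_zero_iff two_ne_zero |>.1 hn), Finset.sum_range_zero]) _ hlim
  have herr' := (herr.trans_isBigO hbound).tendsto_div_nhds_zero
  refine (zero_add (α * γ) ▸ herr'.add (hlim.const_mul α)).congr fun n => ?_
  rw [hsum]
  ring

lemma tendsto_sum_range_div_sq (hu : Tendsto (fun n => u n / n) atTop (𝓝 α)) :
    Tendsto (fun n : ℕ => (∑ j ∈ Finset.range n, u j) / (n : ℝ) ^ 2) atTop (𝓝 (α / 2)) := by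
  have hid : Tendsto (fun n : ℕ => (∑ j ∈ Finset.range n, (j : ℝ) * 1) / (n : ℝ) ^ 2) atTop
      (𝓝 (1 / 2)) := by
    have hlim : Tendsto (fun n : ℕ => (1 - 1 / (n : ℝ)) / 2) atTop (𝓝 ((1 - 0) / 2)) :=
      (tendsto_one_div_atTop_nhds_zero_nat.const_sub 1).div_const 2
    rw [sub_zero] at hlim
    refine hlim.congr' ?_
    filter_upwards [eventually_ne_atTop 0] with n hn
    have hn' : (n : ℝ) ≠ 0 := Nat.cast_ne_zero.2 hn
    have hgauss : (∑ j ∈ Finset.range n, (j : ℝ)) = n * (n - 1) / 2 := by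
      rw [← Nat.cast_sum, Finset.sum_range_id, ← Nat.choose_two_right, Nat.cast_choose_two]
    simp only [mul_one, hgauss]
    field_simp
  simpa only [mul_one, mul_one_div] using
    tendsto_sum_range_mul_div_sq_of_sum_id_mul (g := fun _ => 1) (fun _ => zero_le_one)
      one_half_pos hu hid

lemma sum_range_id_mul (g : ℕ → ℝ) (n : ℕ) :
    ∑ j ∈ Finset.range n, j * g j = n * (∑ j ∈ Finset.range n, g j) -
      ∑ k ∈ Finset.range n, ∑ j ∈ Finset.range k, g j - ∑ j ∈ Finset.range n, g j := by
  induction n with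
  | zero => simp
  | succ n ih =>
    rw [Finset.sum_range_succ, Finset.sum_range_succ (fun k => ∑ j ∈ Finset.range k, g j),
      Finset.sum_range_succ g, ih]
    push_cast
    ring

lemma tendsto_sum_range_mul_div_sq (hg : ∀ n, 0 ≤ g n) (hρ : 0 < ρ)
    (hu : Tendsto (fun n => u n / n) atTop (𝓝 α))
    (hgρ : Tendsto (fun n : ℕ => (∑ j ∈ Finset.range n, g j) / n) atTop (𝓝 ρ)) :
    Tendsto (fun n : ℕ => (∑ j ∈ Finset.range n, u j * g j) / (n : ℝ) ^ 2) atTop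
      (𝓝 (α * (ρ / 2))) := by
  refine tendsto_sum_range_mul_div_sq_of_sum_id_mul hg (half_pos hρ) hu ?_
  have hparts := (hgρ.sub (tendsto_sum_range_div_sq hgρ)).sub
    (hgρ.mul tendsto_one_div_atTop_nhds_zero_nat)
  rw [mul_zero, sub_zero, sub_half] at hparts
  refine hparts.congr' ?_
  filter_upwards [eventually_ne_atTop 0] with n hn
  rw [sum_range_id_mul]
  field_simp

end Averages
section SignedSum

/-- The primitive of `u : ℤ → ℝ` vanishing at `0`: the sum of `u` over `[0, x)` for `0 ≤ x`, and
minus its sum over `[x, 0)` for `x ≤ 0`. -/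
noncomputable def signedSum (u : ℤ → ℝ) (x : ℤ) : ℝ :=
  ∑ j ∈ Finset.range x.toNat, u j - ∑ j ∈ Finset.range (-x).toNat, u (-1 - j)

/-- The reflection of `u` exchanging the values on the edges `{x, x + 1}` and `{-x - 1, -x}`. -/
def edgeReflect (u : ℤ → ℝ) (x : ℤ) : ℝ := u (-1 - x)

lemma signedSum_natCast (u : ℤ → ℝ) (n : ℕ) : signedSum u n = ∑ j ∈ Finset.range n, u j := by
  simp [signedSum]

lemma signedSum_zero (u : ℤ → ℝ) : signedSum u 0 = 0 := signedSum_natCast u 0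

lemma signedSum_neg (u : ℤ → ℝ) (x : ℤ) : signedSum u (-x) = -signedSum (edgeReflect u) x := by
  simp only [signedSum, edgeReflect, neg_neg, sub_sub_cancel, neg_sub]

lemma signedSum_fun_neg (u : ℤ → ℝ) (x : ℤ) :
    signedSum (fun y => -u y) x = -signedSum u x := by
  simp only [signedSum, Finset.sum_neg_distrib]
  ring

lemma signedSum_add_one (u : ℤ → ℝ) (x : ℤ) : signedSum u (x + 1) = signedSum u x + u x := by
  obtain ⟨n, rfl | rfl⟩ : ∃ n : ℕ, x = n ∨ x = -((n : ℤ) + 1) := by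
    rcases le_or_gt 0 x with h | h
    · exact ⟨x.toNat, by omega⟩
    · exact ⟨(-x - 1).toNat, by omega⟩
  · rw [← Nat.cast_add_one, signedSum_natCast, signedSum_natCast, Finset.sum_range_succ]
  · rw [show -((n : ℤ) + 1) + 1 = -n by ring, signedSum_neg, signedSum_neg, ← Nat.cast_add_one,
      signedSum_natCast, signedSum_natCast, Finset.sum_range_succ, edgeReflect, Nat.cast_add_one,
      show -1 - (n : ℤ) = -(n + 1) by ring]
    ring

lemma signedSum_sub_one (u : ℤ → ℝ) (x : ℤ) :
    signedSum u (x - 1) = signedSum u x - u (x - 1) := by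
  rw [eq_sub_iff_add_eq, ← signedSum_add_one, sub_add_cancel]

lemma signedSum_monotone {u : ℤ → ℝ} (hu : ∀ x, 0 ≤ u x) : Monotone (signedSum u) :=
  monotone_int_of_le_succ fun x => by linarith [signedSum_add_one u x, hu x]

lemma sum_Ico_add_one_sub (v : ℤ → ℝ) {a b : ℤ} (hab : a ≤ b) :
    ∑ x ∈ Finset.Ico a b, (v (x + 1) - v x) = v b - v a := by
  induction b, hab using Int.leInduction with
  | base => simp
  | succ b hab ih =>
    rw [← Finset.insert_Ico_right_eq_Ico_add_one hab, Finset.sum_insert Finset.right_notMem_Ico, ih]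
    ring

end SignedSum

section Walk

variable (κ : ℤ → ℝ)

lemma cbar_pos {κ : ℤ → ℝ} (hκ : ∀ x, 0 < κ x) (x : ℤ) : 0 < cbar κ x := add_pos (hκ _) (hκ _)

lemma cbar_eq_signedSum_sub (x : ℤ) :
    cbar κ x = signedSum κ (x + 1) - signedSum κ (x - 1) := by
  rw [signedSum_add_one, signedSum_sub_one, cbar]
  ring

lemma sum_Ico_cbar_le {κ : ℤ → ℝ} (hκ : ∀ x, 0 ≤ κ x) {a b : ℤ} (hab : a < b) :
    ∑ x ∈ Finset.Ico (a + 1) b, cbar κ x ≤ 2 * (signedSum κ b - signedSum κ a) := by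
  calc ∑ x ∈ Finset.Ico (a + 1) b, cbar κ x
      = ∑ x ∈ Finset.Ico (a + 1) b, ((signedSum κ (x + 1) + signedSum κ (x + 1 - 1)) -
          (signedSum κ x + signedSum κ (x - 1))) := by
        refine Finset.sum_congr rfl fun x _ => ?_
        rw [cbar_eq_signedSum_sub, add_sub_cancel_right]
        ring
    _ = (signedSum κ b + signedSum κ (b - 1)) - (signedSum κ (a + 1) + signedSum κ a) := by
        rw [sum_Ico_add_one_sub (fun x => signedSum κ x + signedSum κ (x - 1)) hab,
          add_sub_cancel_right]
    _ ≤ 2 * (signedSum κ b - signedSum κ a) := by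
        linarith [signedSum_monotone hκ (sub_one_lt b).le, signedSum_monotone hκ (lt_add_one a).le]

lemma step_nonneg {κ : ℤ → ℝ} (hκ : ∀ x, 0 < κ x) (x y : ℤ) : 0 ≤ step κ x y := by
  unfold step
  have hquot : ∀ z, 0 ≤ κ z / cbar κ x := fun z => div_nonneg (hκ z).le (cbar_pos hκ x).le
  split_ifs
  exacts [hquot _, hquot _, le_rfl]

lemma walk_nonneg {κ : ℤ → ℝ} (hκ : ∀ x, 0 < κ x) (n : ℕ) (x y : ℤ) : 0 ≤ walk κ n x y := by
  induction n generalizing y with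
  | zero => exact ite_nonneg zero_le_one le_rfl
  | succ n ih =>
    exact add_nonneg (mul_nonneg (ih _) (step_nonneg hκ _ _))
      (mul_nonneg (ih _) (step_nonneg hκ _ _))

/-- The transition operator of the walk: `markovOp κ f x` is the expectation of `f` after one step
from `x`. -/
noncomputable def markovOp (f : ℤ → ℝ) (x : ℤ) : ℝ :=
  step κ x (x + 1) * f (x + 1) + step κ x (x - 1) * f (x - 1)

lemma markovOp_eq (f : ℤ → ℝ) (x : ℤ) :
    markovOp κ f x = (κ x * f (x + 1) + κ (x - 1) * f (x - 1)) / cbar κ x := by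
  have hne : x - 1 ≠ x + 1 := by omega
  simp only [markovOp, step, if_true, if_neg hne]
  ring

lemma markovOp_one {κ : ℤ → ℝ} (hκ : ∀ x, cbar κ x ≠ 0) : markovOp κ 1 = 1 := by
  ext x
  rw [markovOp_eq, Pi.one_apply, Pi.one_apply, mul_one, mul_one, add_comm]
  exact div_self (hκ x)

lemma summable_walk_mul (n : ℕ) (x : ℤ) (f : ℤ → ℝ) : Summable fun y => walk κ n x y * f y := by
  induction n generalizing f with
  | zero =>
    refine summable_of_ne_finset_zero (s := {x}) fun y hy => ?_
    rw [walk, if_neg (Finset.mem_singleton.not.1 hy), zero_mul]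
  | succ n ih =>
    have hright := (Equiv.subRight (1 : ℤ)).summable_iff.2
      (ih fun y => step κ y (y + 1) * f (y + 1))
    have hleft := (Equiv.addRight (1 : ℤ)).summable_iff.2
      (ih fun y => step κ y (y - 1) * f (y - 1))
    refine (hright.add hleft).congr fun y => ?_
    simp only [Function.comp_apply, Equiv.subRight_apply, Equiv.coe_addRight, sub_add_cancel,
      add_sub_cancel_right, walk]
    ring

lemma summable_walk (n : ℕ) (x : ℤ) : Summable (walk κ n x) := by
  simpa only [mul_one] using summable_walk_mul κ n x fun _ => 1

lemma tsum_walk_succ_mul (n : ℕ) (x : ℤ) (f : ℤ → ℝ) :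
    ∑' y, walk κ (n + 1) x y * f y = ∑' y, walk κ n x y * markovOp κ f y := by
  have hright := summable_walk_mul κ n x fun y => step κ y (y + 1) * f (y + 1)
  have hleft := summable_walk_mul κ n x fun y => step κ y (y - 1) * f (y - 1)
  have hshift := ((Equiv.subRight (1 : ℤ)).hasSum_iff.2 hright.hasSum).add
    ((Equiv.addRight (1 : ℤ)).hasSum_iff.2 hleft.hasSum)
  simp only [markovOp, mul_add]
  rw [hright.tsum_add hleft, ← hshift.tsum_eq]
  refine tsum_congr fun y => ?_
  simp only [Function.comp_apply, Equiv.subRight_apply, Equiv.coe_addRight, sub_add_cancel,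
    add_sub_cancel_right, walk]
  ring

lemma tsum_walk_zero_mul (x : ℤ) (f : ℤ → ℝ) : ∑' y, walk κ 0 x y * f y = f x := by
  rw [tsum_eq_single x fun y hy => by rw [walk, if_neg hy, zero_mul], walk, if_pos rfl, one_mul]

variable {κ}

lemma tsum_walk (hκ : ∀ x, cbar κ x ≠ 0) (n : ℕ) (x : ℤ) : ∑' y, walk κ n x y = 1 := by
  suffices ∑' y, walk κ n x y * (1 : ℤ → ℝ) y = 1 by
    simpa only [Pi.one_apply, mul_one] using this
  induction n with
  | zero => exact tsum_walk_zero_mul κ x 1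
  | succ n ih => rw [tsum_walk_succ_mul, markovOp_one hκ, ih]

lemma tsum_walk_mul_of_markovOp_eq_add_one (hκ : ∀ x, cbar κ x ≠ 0) {f : ℤ → ℝ}
    (hf : ∀ x, markovOp κ f x = f x + 1) (n : ℕ) (x : ℤ) :
    ∑' y, walk κ n x y * f y = f x + n := by
  induction n with
  | zero => rw [tsum_walk_zero_mul, Nat.cast_zero, add_zero]
  | succ n ih =>
    simp only [tsum_walk_succ_mul, hf, mul_add, mul_one]
    rw [(summable_walk_mul κ n x f).tsum_add (summable_walk κ n x), ih, tsum_walk hκ]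
    push_cast
    ring

lemma one_sub_div_le_sum_walk (hκ : ∀ x, 0 < κ x) {f : ℤ → ℝ} (hf : ∀ y, 0 ≤ f y)
    (hstep : ∀ y, markovOp κ f y = f y + 1) {b : ℝ} (hb : 0 < b) {B : Finset ℤ}
    (hB : ∀ y ∉ B, b ≤ f y) (n : ℕ) (x : ℤ) :
    1 - (f x + n) / b ≤ ∑ y ∈ B, walk κ n x y := by
  have hcbar := fun y => (cbar_pos hκ y).ne'
  have hsum := (summable_walk_mul κ n x f).div_const b
  calc 1 - (f x + n) / b
      = ∑' y, (walk κ n x y - walk κ n x y * f y / b) := by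
        rw [(summable_walk κ n x).tsum_sub hsum, tsum_walk hcbar, tsum_div_const,
          tsum_walk_mul_of_markovOp_eq_add_one hcbar hstep]
    _ ≤ ∑' y, (B : Set ℤ).indicator (walk κ n x) y := by
        refine ((summable_walk κ n x).sub hsum).tsum_le_tsum (fun y => ?_)
          ((summable_walk κ n x).indicator _)
        have hwalk := walk_nonneg hκ n x y
        by_cases hy : y ∈ B
        · rw [Set.indicator_of_mem (Finset.mem_coe.2 hy), sub_le_self_iff]
          exact div_nonneg (mul_nonneg hwalk (hf y)) hb.le
        · rw [Set.indicator_of_notMem (Finset.mem_coe.not.2 hy), sub_nonpos, le_div_iff₀ hb]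
          exact mul_le_mul_of_nonneg_left (hB y hy) hwalk
    _ = ∑ y ∈ B, walk κ n x y := (sum_eq_tsum_indicator _ B).symm

lemma sq_sum_walk_div_le_energy (hκ : ∀ x, 0 < κ x) (n : ℕ) (B : Finset ℤ) :
    (∑ x ∈ B, walk κ n 0 x) ^ 2 / ∑ x ∈ B, cbar κ x ≤ energy κ n := by
  have hterm : ∀ x, heatK κ n x ^ 2 * cbar κ x = walk κ n 0 x ^ 2 / cbar κ x := fun x => by
    have hne := (cbar_pos hκ x).ne'
    rw [heatK]
    field_simp
  have hsummable : Summable fun x => walk κ n 0 x ^ 2 / cbar κ x :=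
    (summable_walk_mul κ n 0 fun x => walk κ n 0 x / cbar κ x).congr fun x => by ring
  rw [energy, tsum_congr hterm]
  exact (Finset.sq_sum_div_le_sum_sq_div _ _ fun x _ => cbar_pos hκ x).trans
    (hsummable.sum_le_tsum B fun x _ => div_nonneg (sq_nonneg _) (cbar_pos hκ x).le)

end Walk

section PoissonSol

variable {κ : ℤ → ℝ}

/-- The solution of the Poisson equation `P F = F + 1` with `F 0 = 0`, where `P` is the transition
operator `markovOp κ`; it plays the role that `x ^ 2` has for the simple random walk. -/
noncomputable def poissonSol (κ : ℤ → ℝ) : ℤ → ℝ :=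
  signedSum fun x => (signedSum κ x + signedSum κ (x + 1)) / κ x

lemma poissonSol_zero (κ : ℤ → ℝ) : poissonSol κ 0 = 0 := signedSum_zero _

lemma poissonSol_neg (κ : ℤ → ℝ) (x : ℤ) : poissonSol κ (-x) = poissonSol (edgeReflect κ) x := by
  have hincr : (edgeReflect fun y => (signedSum κ y + signedSum κ (y + 1)) / κ y) = fun y =>
      -((signedSum (edgeReflect κ) y + signedSum (edgeReflect κ) (y + 1)) / edgeReflect κ y) := by
    ext y
    rw [edgeReflect, show -1 - y + 1 = -y by ring, show -1 - y = -(y + 1) by ring, signedSum_neg,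
      signedSum_neg, edgeReflect, show -1 - y = -(y + 1) by ring]
    ring
  rw [poissonSol, signedSum_neg, hincr, signedSum_fun_neg, neg_neg, poissonSol]

lemma mul_poissonSol_add_one_sub (hκ : ∀ x, κ x ≠ 0) (x : ℤ) :
    κ x * (poissonSol κ (x + 1) - poissonSol κ x) = signedSum κ x + signedSum κ (x + 1) := by
  rw [poissonSol, signedSum_add_one _ x, add_sub_cancel_left, mul_div_cancel₀ _ (hκ x)]

lemma markovOp_poissonSol (hκ : ∀ x, 0 < κ x) (x : ℤ) :
    markovOp κ (poissonSol κ) x = poissonSol κ x + 1 := by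
  have hne := fun y => (hκ y).ne'
  have hright := mul_poissonSol_add_one_sub hne x
  have hleft := mul_poissonSol_add_one_sub hne (x - 1)
  have hcbar := cbar_eq_signedSum_sub κ x
  rw [sub_add_cancel] at hleft
  rw [markovOp_eq, div_eq_iff (cbar_pos hκ x).ne']
  rw [cbar] at hcbar ⊢
  linarith

lemma poissonSol_natCast_monotone (hκ : ∀ x, 0 < κ x) : Monotone fun n : ℕ => poissonSol κ n := by
  refine monotone_nat_of_le_succ fun n => ?_
  have hpos : ∀ m : ℕ, 0 ≤ signedSum κ m := fun m => by
    rw [signedSum_natCast]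
    exact Finset.sum_nonneg fun j _ => (hκ j).le
  have hincr := mul_poissonSol_add_one_sub (fun y => (hκ y).ne') n
  rw [← Nat.cast_add_one] at hincr
  exact sub_nonneg.1 (nonneg_of_mul_nonneg_right
    (hincr.symm ▸ add_nonneg (hpos n) (hpos (n + 1))) (hκ n))

lemma edgeReflect_pos (hκ : ∀ x, 0 < κ x) (x : ℤ) : 0 < edgeReflect κ x := hκ _

lemma le_poissonSol_of_le_abs (hκ : ∀ x, 0 < κ x) {N : ℕ} {b : ℝ} (hright : b ≤ poissonSol κ N)
    (hleft : b ≤ poissonSol κ (-N)) {x : ℤ} (hx : N ≤ |x|) : b ≤ poissonSol κ x := by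
  have hN : N ≤ x.natAbs := by rwa [Int.abs_eq_natAbs, Nat.cast_le] at hx
  rcases Int.natAbs_eq x with h | h <;> rw [h]
  · exact hright.trans (poissonSol_natCast_monotone hκ hN)
  · rw [poissonSol_neg] at hleft ⊢
    exact hleft.trans (poissonSol_natCast_monotone (edgeReflect_pos hκ) hN)

lemma poissonSol_nonneg (hκ : ∀ x, 0 < κ x) (x : ℤ) : 0 ≤ poissonSol κ x := by
  refine le_poissonSol_of_le_abs (N := 0) hκ ?_ ?_ (abs_nonneg x) <;>
    simp only [Nat.cast_zero, neg_zero, poissonSol_zero, le_refl]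

lemma sq_one_sub_div_le_energy (hκ : ∀ x, 0 < κ x) {n N : ℕ} (hN : 0 < N) {b : ℝ} (hb : 0 < b)
    (hnb : n ≤ b) (hright : b ≤ poissonSol κ N) (hleft : b ≤ poissonSol κ (-N)) {w : ℝ}
    (hw : 2 * (signedSum κ N - signedSum κ (-N)) ≤ w) : (1 - n / b) ^ 2 / w ≤ energy κ n := by
  have hlt : (-N : ℤ) < N := by omega
  have hmass := one_sub_div_le_sum_walk hκ (poissonSol_nonneg hκ) (markovOp_poissonSol hκ) hb
    (B := Finset.Ico (-N + 1) N)
    (fun y hy => le_poissonSol_of_le_abs hκ hright hleft (by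
      rw [Finset.mem_Ico] at hy
      rcases abs_cases y with h | h <;> omega)) n 0
  rw [poissonSol_zero, zero_add] at hmass
  have hbox : 0 < ∑ x ∈ Finset.Ico (-N + 1 : ℤ) N, cbar κ x :=
    Finset.sum_pos (fun x _ => cbar_pos hκ x) (Finset.nonempty_Ico.2 (by omega))
  have hnb' : 0 ≤ 1 - n / b := sub_nonneg.2 ((div_le_one hb).2 hnb)
  calc (1 - n / b) ^ 2 / w
      ≤ (∑ x ∈ Finset.Ico (-N + 1 : ℤ) N, walk κ n 0 x) ^ 2 /
          ∑ x ∈ Finset.Ico (-N + 1 : ℤ) N, cbar κ x := by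
        gcongr
        exact (sum_Ico_cbar_le (fun x => (hκ x).le) hlt).trans hw
    _ ≤ energy κ n := sq_sum_walk_div_le_energy hκ n _

end PoissonSol

section TwoSidedMean

variable {u κ g : ℤ → ℝ} {α ρ : ℝ}

/-- The averages of `u` over `[0, n)` and over `[-n, 0)` both tend to `a`. -/
def HasTwoSidedMean (u : ℤ → ℝ) (a : ℝ) : Prop :=
  Tendsto (fun n : ℕ => signedSum u n / n) atTop (𝓝 a) ∧
    Tendsto (fun n : ℕ => signedSum (edgeReflect u) n / n) atTop (𝓝 a)

lemma HasTwoSidedMean.tendsto_signedSum_sub_div (hu : HasTwoSidedMean u α) :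
    Tendsto (fun n : ℕ => (signedSum u n - signedSum u (-n)) / n) atTop (𝓝 (2 * α)) := by
  rw [two_mul]
  refine (hu.1.add hu.2).congr fun n => ?_
  rw [signedSum_neg, sub_neg_eq_add, add_div]

lemma two_mul_sum_range_le_poissonSol (hκ : ∀ x, 0 < κ x) (hgκ : ∀ x, g x ≤ 1 / κ x) (n : ℕ) :
    2 * ∑ j ∈ Finset.range n, signedSum κ j * g j ≤ poissonSol κ n := by
  rw [poissonSol, signedSum_natCast, Finset.mul_sum]
  refine Finset.sum_le_sum fun j _ => ?_
  have hnonneg : 0 ≤ signedSum κ j :=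
    signedSum_zero κ ▸ signedSum_monotone (fun x => (hκ x).le) (Int.natCast_nonneg j)
  calc 2 * (signedSum κ j * g j) ≤ 2 * (signedSum κ j * (1 / κ j)) := by gcongr; exact hgκ j
    _ = (signedSum κ j + signedSum κ j) / κ j := by ring
    _ ≤ (signedSum κ j + signedSum κ (j + 1)) / κ j := by
      have := (hκ j).le
      gcongr
      exact signedSum_monotone (fun x => (hκ x).le) (lt_add_one _).le

lemma eventually_mul_sq_le_poissonSol_natCast (hκ : ∀ x, 0 < κ x) (hg : ∀ x, 0 ≤ g x)
    (hgκ : ∀ x, g x ≤ 1 / κ x) (hρ : 0 < ρ)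
    (hmean : Tendsto (fun n : ℕ => signedSum κ n / n) atTop (𝓝 α))
    (hgmean : Tendsto (fun n : ℕ => signedSum g n / n) atTop (𝓝 ρ)) {β : ℝ} (hβ : β < α * ρ) :
    ∀ᶠ n : ℕ in atTop, β * n ^ 2 ≤ poissonSol κ n := by
  simp only [signedSum_natCast g] at hgmean
  have hlim := tendsto_sum_range_mul_div_sq (fun j => hg j) hρ hmean hgmean
  filter_upwards [hlim.eventually_const_lt (show β / 2 < α * (ρ / 2) by linarith),
    eventually_gt_atTop 0] with n hlt hn
  have hn' : (0 : ℝ) < n := Nat.cast_pos.2 hn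
  rw [lt_div_iff₀ (by positivity)] at hlt
  linarith [two_mul_sum_range_le_poissonSol hκ hgκ n]

lemma eventually_mul_sq_le_poissonSol (hκ : ∀ x, 0 < κ x) (hg : ∀ x, 0 ≤ g x)
    (hgκ : ∀ x, g x ≤ 1 / κ x) (hρ : 0 < ρ) (hmean : HasTwoSidedMean κ α)
    (hgmean : HasTwoSidedMean g ρ) {β : ℝ} (hβ : β < α * ρ) :
    ∀ᶠ n : ℕ in atTop, β * n ^ 2 ≤ poissonSol κ n ∧ β * n ^ 2 ≤ poissonSol κ (-n) := by
  simp only [poissonSol_neg]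
  exact (eventually_mul_sq_le_poissonSol_natCast hκ hg hgκ hρ hmean.1 hgmean.1 hβ).and
    (eventually_mul_sq_le_poissonSol_natCast (edgeReflect_pos hκ) (fun x => hg (-1 - x))
      (fun x => hgκ (-1 - x)) hρ hmean.2 hgmean.2 hβ)

lemma tendsto_natCeil_mul_sqrt_atTop {r : ℝ} (hr : 0 < r) :
    Tendsto (fun n : ℕ => ⌈r * √n⌉₊) atTop atTop :=
  tendsto_nat_ceil_atTop.comp
    ((Real.tendsto_sqrt_atTop.comp tendsto_natCast_atTop_atTop).const_mul_atTop hr)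

lemma HasTwoSidedMean.eventually_signedSum_sub_le (hu : HasTwoSidedMean u α) {r w : ℝ}
    (hr : 0 < r) (hw : 2 * α * r < w) :
    ∀ᶠ n : ℕ in atTop, signedSum u ⌈r * √n⌉₊ - signedSum u (-⌈r * √n⌉₊) ≤ w * √n := by
  have hlim := (hu.tendsto_signedSum_sub_div.comp (tendsto_natCeil_mul_sqrt_atTop hr)).mul
    ((tendsto_nat_ceil_mul_div_atTop hr.le).comp
      (Real.tendsto_sqrt_atTop.comp tendsto_natCast_atTop_atTop))
  filter_upwards [hlim.eventually_lt_const hw, eventually_gt_atTop 0] with n hlt hn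
  have hn' : (0 : ℝ) < n := Nat.cast_pos.2 hn
  have hceil : (⌈r * √n⌉₊ : ℝ) ≠ 0 := Nat.cast_ne_zero.2 (Nat.ceil_pos.2 (by positivity)).ne'
  simp only [Function.comp_apply] at hlt
  rw [div_mul_div_cancel₀ hceil, div_lt_iff₀ (Real.sqrt_pos.2 hn')] at hlt
  exact hlt.le

theorem eventually_le_sqrt_mul_energy (hκ : ∀ x, 0 < κ x) (hg : ∀ x, 0 ≤ g x)
    (hgκ : ∀ x, g x ≤ 1 / κ x) (hρ : 0 < ρ) (hmean : HasTwoSidedMean κ α)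
    (hgmean : HasTwoSidedMean g ρ) {r M w : ℝ} (hr : 0 < r) (hM : 1 < M)
    (hMr : M < α * ρ * r ^ 2) (hw : 2 * α * r < w) :
    ∀ᶠ n : ℕ in atTop, (1 - 1 / M) ^ 2 / (2 * w) ≤ √n * energy κ n := by
  have hM0 : 0 < M := one_pos.trans hM
  have hN := tendsto_natCeil_mul_sqrt_atTop hr
  have hβ : M / r ^ 2 < α * ρ := (div_lt_iff₀ (by positivity)).2 hMr
  filter_upwards [eventually_gt_atTop 0, hmean.eventually_signedSum_sub_le hr hw,
    hN.eventually (eventually_mul_sq_le_poissonSol hκ hg hgκ hρ hmean hgmean hβ)]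
    with n hn hwidth ⟨hright, hleft⟩
  have hn' : (0 : ℝ) < n := Nat.cast_pos.2 hn
  have hbox : M * n ≤ M / r ^ 2 * (⌈r * √n⌉₊ : ℝ) ^ 2 := by
    calc M * n = M / r ^ 2 * (r * √n) ^ 2 := by
          rw [mul_pow, Real.sq_sqrt hn'.le]
          field_simp
      _ ≤ M / r ^ 2 * (⌈r * √n⌉₊ : ℝ) ^ 2 := by
          gcongr
          exact Nat.le_ceil _
  have henergy := sq_one_sub_div_le_energy hκ (Nat.ceil_pos.2 (by positivity))
    (mul_pos hM0 hn') (le_mul_of_one_le_left hn'.le hM.le) (hbox.trans hright)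
    (hbox.trans hleft) (mul_le_mul_of_nonneg_left hwidth zero_le_two)
  calc (1 - 1 / M) ^ 2 / (2 * w)
      = √n * ((1 - n / (M * n)) ^ 2 / (2 * (w * √n))) := by
        have hsqrt : √(n : ℝ) ≠ 0 := (Real.sqrt_pos.2 hn').ne'
        field_simp
    _ ≤ √n * energy κ n := by gcongr

theorem eventually_inv_thirteen_mul_sqrt_le (hκ : ∀ x, 0 < κ x) (hg : ∀ x, 0 ≤ g x)
    (hgκ : ∀ x, g x ≤ 1 / κ x) (hα : 0 < α) (hρ : 0 < ρ) (hmean : HasTwoSidedMean κ α)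
    (hgmean : HasTwoSidedMean g ρ) :
    ∀ᶠ n : ℕ in atTop, 1 / 13 * √(ρ / (2 * α)) ≤ √n * energy κ n := by
  set q := √(ρ / (2 * α)) with hq
  have hq0 : 0 < q := Real.sqrt_pos.2 (by positivity)
  have hρq : ρ = 2 * α * q ^ 2 := by
    rw [hq, Real.sq_sqrt (by positivity), mul_div_cancel₀ _ (by positivity)]
  -- With `α ρ r ^ 2 = 9 / 2` and `2 α r = 3 / q`, these choices give the constant `9 / 112`.
  have hev := eventually_le_sqrt_mul_energy hκ hg hgκ hρ hmean hgmean (r := 3 / (2 * α * q))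
    (M := 4) (w := 7 / (2 * q)) (by positivity) (by norm_num)
    (by rw [hρq]; field_simp; norm_num) (by field_simp; norm_num)
  refine hev.mono fun n hn => le_trans ?_ hn
  field_simp
  norm_num

end TwoSidedMean

section Environment

variable {Ω : Type*} {T : Equiv.Perm Ω} {f : Ω → ℝ}

lemma signedSum_envC_natCast (T : Equiv.Perm Ω) (f : Ω → ℝ) (ω : Ω) (n : ℕ) :
    signedSum (envC T f ω) n = birkhoffSum T f n ω := by
  simp only [signedSum_natCast, envC, birkhoffSum, zpow_natCast, Equiv.Perm.iterate_eq_pow]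

lemma edgeReflect_envC (T : Equiv.Perm Ω) (f : Ω → ℝ) (ω : Ω) :
    edgeReflect (envC T f ω) = envC T.symm f (T.symm ω) := by
  ext x
  rw [edgeReflect, envC, envC, ← Equiv.Perm.inv_def, sub_eq_add_neg, add_comm, zpow_add, zpow_neg,
    zpow_neg_one, inv_zpow, Equiv.Perm.mul_apply]

variable [MeasurableSpace Ω] {μ : Measure Ω}

lemma ergodic_symm_of_measurable_symm (hT : Ergodic T μ) (hTsymm : Measurable T.symm) :
    Ergodic T.symm μ :=
  let e : Ω ≃ᵐ Ω := ⟨T, hT.measurable, hTsymm⟩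
  Ergodic.symm (e := e) hT

lemma ae_tendsto_signedSum_envC [IsFiniteMeasure μ] (hT : Ergodic T μ) (hf : Integrable f μ) :
    ∀ᵐ ω ∂μ, Tendsto (fun n : ℕ => signedSum (envC T f ω) n / n) atTop (𝓝 (⨍ ω, f ω ∂μ)) := by
  filter_upwards [ae_tendsto_birkhoffAverage hT hf] with ω hω
  refine hω.congr fun n => ?_
  rw [signedSum_envC_natCast, birkhoffAverage, smul_eq_mul, inv_mul_eq_div]

theorem ae_hasTwoSidedMean_envC [IsFiniteMeasure μ] (hT : Ergodic T μ)
    (hTsymm : Measurable T.symm) (hf : Integrable f μ) :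
    ∀ᵐ ω ∂μ, HasTwoSidedMean (envC T f ω) (⨍ ω, f ω ∂μ) := by
  have hsymm := ergodic_symm_of_measurable_symm hT hTsymm
  filter_upwards [ae_tendsto_signedSum_envC hT hf,
    hsymm.quasiMeasurePreserving.ae (ae_tendsto_signedSum_envC hsymm hf)] with ω hright hleft
  exact ⟨hright, (edgeReflect_envC T f ω).symm ▸ hleft⟩

variable {c g : Ω → ℝ}

lemma integral_pos_of_pos [NeZero μ] (hf0 : ∀ ω, 0 < f ω) (hf : Integrable f μ) :
    0 < ∫ ω, f ω ∂μ := by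
  rw [integral_pos_iff_support_of_nonneg (fun ω => (hf0 ω).le) hf,
    Function.support_eq_univ fun ω => (hf0 ω).ne']
  exact Measure.measure_univ_pos.2 (NeZero.ne μ)

lemma ae_eventually_inv_thirteen_mul_sqrt_le [IsProbabilityMeasure μ] (hT : Ergodic T μ)
    (hTsymm : Measurable T.symm) (hcpos : ∀ ω, 0 < c ω) (hc : Integrable c μ)
    (hg0 : ∀ ω, 0 < g ω) (hgc : ∀ ω, g ω ≤ 1 / c ω) (hg : Integrable g μ) :
    ∀ᵐ ω ∂μ, ∀ᶠ n : ℕ in atTop, 1 / 13 * √((∫ ω, g ω ∂μ) / (2 * ∫ ω, c ω ∂μ)) ≤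
      √n * energy (envC T c ω) n := by
  filter_upwards [ae_hasTwoSidedMean_envC hT hTsymm hc, ae_hasTwoSidedMean_envC hT hTsymm hg]
    with ω hmean hgmean
  rw [average_eq_integral] at hmean hgmean
  exact eventually_inv_thirteen_mul_sqrt_le (fun x => hcpos _) (fun x => (hg0 _).le)
    (fun x => hgc _) (integral_pos_of_pos hcpos hc) (integral_pos_of_pos hg0 hg) hmean hgmean

lemma integrable_min_const [IsFiniteMeasure μ] (hf : AEStronglyMeasurable f μ)
    (hf0 : ∀ ω, 0 ≤ f ω) {C : ℝ} (hC : 0 ≤ C) : Integrable (fun ω => min (f ω) C) μ := by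
  refine (integrable_const C).mono' (hf.inf aestronglyMeasurable_const) (.of_forall fun ω => ?_)
  rw [Real.norm_of_nonneg (le_min (hf0 ω) hC)]
  exact min_le_right _ _

lemma tendsto_ofReal_integral_min_natCast_add_one [IsFiniteMeasure μ]
    (hf : AEStronglyMeasurable f μ) (hf0 : ∀ ω, 0 ≤ f ω) :
    Tendsto (fun K : ℕ => ENNReal.ofReal (∫ ω, min (f ω) (K + 1) ∂μ)) atTop
      (𝓝 (∫⁻ ω, ENNReal.ofReal (f ω) ∂μ)) := by
  have hint := fun K : ℕ => integrable_min_const hf hf0 K.cast_add_one_pos.le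
  have hlint : ∀ K : ℕ, ENNReal.ofReal (∫ ω, min (f ω) (K + 1) ∂μ) =
      ∫⁻ ω, ENNReal.ofReal (min (f ω) (K + 1)) ∂μ := fun K =>
    ofReal_integral_eq_lintegral_ofReal (hint K)
      (.of_forall fun ω => le_min (hf0 ω) K.cast_add_one_pos.le)
  simp only [hlint]
  refine lintegral_tendsto_of_tendsto_of_monotone (fun K => (hint K).aemeasurable.ennreal_ofReal)
    (.of_forall fun ω K L hKL => ?_) (.of_forall fun ω => ?_)
  · exact ENNReal.ofReal_le_ofReal (min_le_min le_rfl (by gcongr))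
  · refine tendsto_const_nhds.congr' ?_
    filter_upwards [eventually_ge_atTop ⌈f ω⌉₊] with K hK
    rw [min_eq_left ((Nat.ceil_le.1 hK).trans (lt_add_one _).le)]

lemma lintegral_ofReal_comp_add {S : Ω → Ω} (hS : MeasurePreserving S μ μ) (hf : Integrable f μ)
    (hf0 : ∀ ω, 0 ≤ f ω) :
    ∫⁻ ω, ENNReal.ofReal (f (S ω) + f ω) ∂μ = ENNReal.ofReal (2 * ∫ ω, f ω ∂μ) := by
  have hcomp : Integrable (fun ω => f (S ω)) μ := hS.integrable_comp_of_integrable hf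
  have hsum : Integrable (fun ω => f (S ω) + f ω) μ := hcomp.add hf
  rw [← ofReal_integral_eq_lintegral_ofReal hsum
    (.of_forall fun ω => add_nonneg (hf0 _) (hf0 _)), integral_add hcomp hf,
    integral_comp_eq_of_measurePreserving hS hf.aestronglyMeasurable, two_mul]

lemma ofReal_inv_thirteen_mul_sqrt_div {a b : ℝ} (ha : 0 ≤ a) (hb : 0 < b) :
    ENNReal.ofReal (1 / 13 * √(a / b)) =
      1 / 13 * (ENNReal.ofReal a / ENNReal.ofReal b) ^ ((1 : ℝ) / 2) := by
  rw [ENNReal.ofReal_mul (by norm_num), Real.sqrt_eq_rpow,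
    ← ENNReal.ofReal_rpow_of_nonneg (div_nonneg ha hb.le) one_half_pos.le,
    ENNReal.ofReal_div_of_pos hb, ENNReal.ofReal_div_of_pos (by norm_num), ENNReal.ofReal_one,
    ENNReal.ofReal_ofNat]

theorem ae_le_liminf_sqrt_mul_energy [IsProbabilityMeasure μ] (hT : Ergodic T μ)
    (hTsymm : Measurable T.symm) (hcpos : ∀ ω, 0 < c ω) (hc : Integrable c μ) :
    ∀ᵐ ω ∂μ, (1 / 13 : ℝ≥0∞) * ((∫⁻ ω, ENNReal.ofReal (1 / c ω) ∂μ) /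
        ENNReal.ofReal (2 * ∫ ω, c ω ∂μ)) ^ ((1 : ℝ) / 2) ≤
      liminf (fun n : ℕ => ENNReal.ofReal (√n * energy (envC T c ω) n)) atTop := by
  have hα : 0 < 2 * ∫ ω, c ω ∂μ := mul_pos two_pos (integral_pos_of_pos hcpos hc)
  have hinv0 : ∀ ω, 0 < 1 / c ω := fun ω => one_div_pos.2 (hcpos ω)
  have hinvm : AEStronglyMeasurable (fun ω => 1 / c ω) μ :=
    (hc.aemeasurable.const_div 1).aestronglyMeasurable
  have hmin0 : ∀ (K : ℕ) ω, 0 < min (1 / c ω) (K + 1) := fun K ω =>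
    lt_min (hinv0 ω) K.cast_add_one_pos
  have hbound : ∀ K : ℕ, ∀ᵐ ω ∂μ, ∀ᶠ n : ℕ in atTop,
      1 / 13 * √((∫ ω, min (1 / c ω) (K + 1) ∂μ) / (2 * ∫ ω, c ω ∂μ)) ≤
        √n * energy (envC T c ω) n := fun K =>
    ae_eventually_inv_thirteen_mul_sqrt_le hT hTsymm hcpos hc (hmin0 K)
      (fun ω => min_le_left _ _)
      (integrable_min_const hinvm (fun ω => (hinv0 ω).le) K.cast_add_one_pos.le)
  have hlim := ENNReal.Tendsto.const_mul (a := (1 / 13 : ℝ≥0∞))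
    ((ENNReal.Tendsto.div_const
      (tendsto_ofReal_integral_min_natCast_add_one hinvm fun ω => (hinv0 ω).le)
      (.inr (ENNReal.ofReal_pos.2 hα).ne')).ennrpow_const ((1 : ℝ) / 2))
    (.inr (by finiteness))
  filter_upwards [ae_all_iff.2 hbound] with ω hω
  refine le_of_tendsto' hlim fun K => ?_
  rw [← ofReal_inv_thirteen_mul_sqrt_div (integral_nonneg fun ω => (hmin0 K ω).le) hα]
  exact le_liminf_of_le (by isBoundedDefault)
    ((hω K).mono fun n hn => ENNReal.ofReal_le_ofReal hn)

lemma tendsto_atTop_of_liminf_ofReal_eq_top {ι : Type*} {l : Filter ι} {u : ι → ℝ}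
    (h : liminf (fun i => ENNReal.ofReal (u i)) l = ⊤) : Tendsto u l atTop :=
  ENNReal.tendsto_ofReal_nhds_top.1 (tendsto_of_le_liminf_of_limsup_le h.ge le_top)

end Environment

theorem energy_liminf_lower_bound {Ω : Type*} [MeasurableSpace Ω]
    (μ : Measure Ω) [IsProbabilityMeasure μ]
    (T : Equiv.Perm Ω) (hT : Ergodic T μ)
    (hTsymm : MeasurePreserving T.symm μ μ)
    (c : Ω → ℝ) (hc : Measurable c) (hcpos : ∀ ω, 0 < c ω)
    (hcbar : Integrable (fun ω => c (T.symm ω) + c ω) μ) :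
    (∀ᵐ ω ∂μ,
      (1 / 13 : ℝ≥0∞) *
          ((∫⁻ ω, ENNReal.ofReal (1 / c ω) ∂μ) /
            (∫⁻ ω, ENNReal.ofReal (c (T.symm ω) + c ω) ∂μ)) ^ ((1 : ℝ) / 2)
        ≤ liminf (fun n : ℕ =>
            ENNReal.ofReal (Real.sqrt n * energy (envC T c ω) n)) atTop)
    ∧ ((∫⁻ ω, ENNReal.ofReal (1 / c ω) ∂μ = ⊤) →
        ∀ᵐ ω ∂μ,
          Tendsto (fun n : ℕ => Real.sqrt n * energy (envC T c ω) n) atTop atTop) := by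
  have hint : Integrable c μ := hcbar.mono' hc.aestronglyMeasurable (.of_forall fun ω => by
    rw [Real.norm_of_nonneg (hcpos ω).le]
    exact le_add_of_nonneg_left (hcpos _).le)
  have hae := ae_le_liminf_sqrt_mul_energy hT hTsymm.measurable hcpos hint
  rw [lintegral_ofReal_comp_add hTsymm hint fun ω => (hcpos ω).le]
  refine ⟨hae, fun htop => hae.mono fun ω hω => tendsto_atTop_of_liminf_ofReal_eq_top ?_⟩
  rwa [htop, ENNReal.top_div_of_ne_top ENNReal.ofReal_ne_top,
    ENNReal.top_rpow_of_pos one_half_pos, ENNReal.mul_top (by simp), top_le_iff] at hω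
end
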